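/- Let f : ℝ^d → ℝ be twice continuously differentiable and convex with L-Lipschitz continuous gradient, with a minimizer x* and minimum value f* := f(x*). Fix x⁰ ∈ ℝ^d and let χ⁰ := {x : f(x) ≤ f(x⁰)} be its sublevel set. Let S ∈ ℝ^{d×τ} have full column rank with operator norm ‖S‖, let M_S > 0, let ϱ > 0, and suppose m₀ := inf_{x ∈ χ⁰} λ_min(Sᵀ∇²f(x)S) > 0. If f(x⁰) − f* ≤ ϱ⁴·2·m₀⁴/(L·M_S²·‖S‖²), then for every x ∈ χ⁰: √(M_S/2)·‖Sᵀ∇f(x)‖^{1/2}·I_τ ⪯ ϱ·Sᵀ∇²f(x)S. -/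

import Mathlib

open Matrix

/-- Reinterpret a plain vector as an element of Euclidean space. -/
noncomputable def toE {n : ℕ} (v : Fin n → ℝ) : EuclideanSpace ℝ (Fin n) := WithLp.toLp 2 v

/-- Reinterpret an element of Euclidean space as a plain vector. -/
noncomputable def fromE {n : ℕ} (v : EuclideanSpace ℝ (Fin n)) : Fin n → ℝ := v

/-- The `τ × τ` matrix `Sᵀ ∇²f(x) S` of the subspace Hessian. -/
noncomputable def subHess {d τ : ℕ} (f : EuclideanSpace ℝ (Fin d) → ℝ)
    (S : Matrix (Fin d) (Fin τ) ℝ) (x : EuclideanSpace ℝ (Fin d)) :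
    Matrix (Fin τ) (Fin τ) ℝ :=
  Matrix.of fun i j =>
    Sᵀ.mulVec (fromE (fderiv ℝ (gradient f) x (toE (S.mulVec (Pi.single j 1))))) i

/-!
For a function with `K`-Lipschitz gradient that is bounded below by `m`, the quadratic upper model
at `x` gives `‖∇f(x)‖² ≤ 2K(f(x) − m)`. Hence `‖Sᵀ∇f(x)‖ ≤ ‖S‖ ‖∇f(x)‖` is controlled by the gap
`f(x⁰) − f*` on the sublevel set, and the assumed bound on this gap says exactly that
`√(M_S/2) ‖Sᵀ∇f(x)‖^{1/2} ≤ ϱ m₀`. The Loewner bound then follows from `m₀ I ⪯ Sᵀ∇²f(x)S`.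
-/

section Gradient

open InnerProductSpace
open scoped Gradient NNReal RealInnerProductSpace

theorem norm_sub_sub_fderiv_le {E F : Type*} [NormedAddCommGroup E] [NormedSpace ℝ E]
    [NormedAddCommGroup F] [NormedSpace ℝ F] {f : E → F} {K : ℝ≥0} (hf : Differentiable ℝ f)
    (hK : LipschitzWith K (fderiv ℝ f)) (x v : E) :
    ‖f (x + v) - f x - fderiv ℝ f x v‖ ≤ K / 2 * ‖v‖ ^ 2 := by
  let r : ℝ → F := fun t => f (x + t • v) - f x - t • fderiv ℝ f x v
  have hr (t : ℝ) : HasDerivAt r (fderiv ℝ f (x + t • v) v - fderiv ℝ f x v) t := by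
    have hline : HasDerivAt (fun t : ℝ => x + t • v) v t := by
      simpa using ((hasDerivAt_id t).smul_const v).const_add x
    have hlinear : HasDerivAt (fun t : ℝ => t • fderiv ℝ f x v) (fderiv ℝ f x v) t := by
      simpa using (hasDerivAt_id t).smul_const (fderiv ℝ f x v)
    exact (((hf _).hasFDerivAt.comp_hasDerivAt t hline).sub_const (f x)).sub hlinear
  have hquadratic (t : ℝ) :
      HasDerivAt (fun t : ℝ => K / 2 * ‖v‖ ^ 2 * t ^ 2) (K * t * ‖v‖ ^ 2) t :=
    ((hasDerivAt_pow 2 t).const_mul (K / 2 * ‖v‖ ^ 2)).congr_deriv (by push_cast; ring)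
  have hbound : ∀ t ∈ Set.Ico (0 : ℝ) 1,
      ‖fderiv ℝ f (x + t • v) v - fderiv ℝ f x v‖ ≤ K * t * ‖v‖ ^ 2 := fun t ht =>
    calc ‖fderiv ℝ f (x + t • v) v - fderiv ℝ f x v‖
        ≤ ‖fderiv ℝ f (x + t • v) - fderiv ℝ f x‖ * ‖v‖ :=
          (fderiv ℝ f (x + t • v) - fderiv ℝ f x).le_opNorm v
      _ ≤ K * ‖x + t • v - x‖ * ‖v‖ := by gcongr; exact hK.norm_sub_le _ _
      _ = K * t * ‖v‖ ^ 2 := by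
          rw [add_sub_cancel_left, norm_smul, Real.norm_of_nonneg ht.1]; ring
  have h := image_norm_le_of_norm_deriv_right_le_deriv_boundary
    (fun t _ => (hr t).continuousAt.continuousWithinAt) (fun t _ => (hr t).hasDerivWithinAt)
    (by simp [r]) hquadratic hbound (Set.right_mem_Icc.2 zero_le_one)
  simpa [r] using h

variable {E : Type*} [NormedAddCommGroup E] [InnerProductSpace ℝ E] [CompleteSpace E]
  {f : E → ℝ} {K : ℝ≥0}

theorem lipschitzWith_gradient_iff : LipschitzWith K (∇ f) ↔ LipschitzWith K (fderiv ℝ f) := by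
  rw [← toDual_comp_gradient, (toDual ℝ E).isometry.lipschitzWith_iff]

theorem apply_add_le_of_lipschitzWith_gradient (hf : Differentiable ℝ f)
    (hK : LipschitzWith K (∇ f)) (x v : E) :
    f (x + v) ≤ f x + ⟪∇ f x, v⟫ + K / 2 * ‖v‖ ^ 2 := by
  have h := norm_sub_sub_fderiv_le hf (lipschitzWith_gradient_iff.1 hK) x v
  rw [← inner_gradient_left] at h
  linarith [le_of_abs_le h]

theorem sq_norm_gradient_le (hf : Differentiable ℝ f) (hK : LipschitzWith K (∇ f)) {m : ℝ}
    (hm : ∀ y, m ≤ f y) (x : E) : ‖∇ f x‖ ^ 2 ≤ 2 * K * (f x - m) := by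
  -- Along `-∇ f x` the upper model minus `m` is a nonnegative quadratic, so its discriminant is
  -- nonpositive; unlike the step `t = 1 / K`, this also covers `K = 0`.
  have hmodel (t : ℝ) :
      0 ≤ K / 2 * ‖∇ f x‖ ^ 2 * (t * t) + -‖∇ f x‖ ^ 2 * t + (f x - m) := by
    have h := (hm _).trans (apply_add_le_of_lipschitzWith_gradient hf hK x (-t • ∇ f x))
    rw [inner_smul_right, real_inner_self_eq_norm_sq, norm_smul, mul_pow, Real.norm_eq_abs,
      sq_abs] at h
    linarith
  have hdiscrim := discrim_le_zero hmodel
  have hgap : 0 ≤ f x - m := sub_nonneg.2 (hm x)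
  rcases (sq_nonneg ‖∇ f x‖).eq_or_lt with hzero | hpos
  · rw [← hzero]
    positivity
  · refine le_of_mul_le_mul_right ?_ hpos
    rw [discrim] at hdiscrim
    linarith

variable {x : E}

theorem inner_fderiv_gradient (v w : E) :
    ⟪fderiv ℝ (∇ f) x v, w⟫ = fderiv ℝ (fderiv ℝ f) x v w := by
  have h : fderiv ℝ (∇ f) x = _ := (toDual ℝ E).symm.comp_fderiv
  rw [h]
  exact toDual_symm_apply

theorem isSelfAdjoint_fderiv_gradient (hx : IsSymmSndFDerivAt ℝ f x) :
    IsSelfAdjoint (fderiv ℝ (∇ f) x) := by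
  refine ContinuousLinearMap.isSelfAdjoint_iff_isSymmetric.2 fun v w => ?_
  rw [ContinuousLinearMap.coe_coe, inner_fderiv_gradient, hx.eq, ← inner_fderiv_gradient,
    real_inner_comm]

end Gradient

section Subspace

open InnerProductSpace ContinuousLinearMap
open scoped Gradient NNReal RealInnerProductSpace

variable {E F : Type*} [NormedAddCommGroup E] [InnerProductSpace ℝ E] [CompleteSpace E]
  [NormedAddCommGroup F] [InnerProductSpace ℝ F] [CompleteSpace F]

theorem smul_one_le_iff_mul_sq_norm_le_inner {T : F →L[ℝ] F} (hT : IsSelfAdjoint T) {a : ℝ} :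
    a • (1 : F →L[ℝ] F) ≤ T ↔ ∀ v, a * ‖v‖ ^ 2 ≤ ⟪T v, v⟫ := by
  have hsub : IsSelfAdjoint (T - a • (1 : F →L[ℝ] F)) := hT.sub (.smul (.all a) (.one _))
  simp [le_def, isPositive_iff', hsub, inner_sub_left, inner_smul_left]

/-- The Hessian of `f` restricted to the directions `A v`, as the operator `A† ∇²f(x) A` on the
parameter space. The Hessian `∇²f(x)` is encoded as the derivative of the gradient. -/
noncomputable def subspaceHessian (f : E → ℝ) (A : F →L[ℝ] E) (x : E) : F →L[ℝ] F :=
  adjoint A ∘L fderiv ℝ (∇ f) x ∘L A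

variable {f : E → ℝ} {A : F →L[ℝ] E} {K : ℝ≥0} {m : ℝ} {x : E}

theorem isSelfAdjoint_subspaceHessian (hx : IsSymmSndFDerivAt ℝ f x) :
    IsSelfAdjoint (subspaceHessian f A x) :=
  (isSelfAdjoint_fderiv_gradient hx).adjoint_conj A

theorem sqrt_mul_sqrt_norm_adjoint_gradient_le (hf : Differentiable ℝ f)
    (hK : LipschitzWith K (∇ f)) (hm : ∀ y, m ≤ f y) {M b : ℝ} (hM : 0 ≤ M) (hb : 0 ≤ b)
    (hgap : (f x - m) * (K * M ^ 2 * ‖A‖ ^ 2) ≤ 2 * b ^ 4) :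
    √(M / 2) * √‖adjoint A (∇ f x)‖ ≤ b := by
  have hadjoint : ‖adjoint A (∇ f x)‖ ≤ ‖A‖ * ‖∇ f x‖ := by
    simpa only [LinearIsometryEquiv.norm_map] using (adjoint A).le_opNorm (∇ f x)
  refine le_of_pow_le_pow_left₀ four_ne_zero hb ?_
  calc (√(M / 2) * √‖adjoint A (∇ f x)‖) ^ 4
    _ = (√(M / 2) ^ 2) ^ 2 * (√‖adjoint A (∇ f x)‖ ^ 2) ^ 2 := by ring
    _ = (M / 2) ^ 2 * ‖adjoint A (∇ f x)‖ ^ 2 := by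
        rw [Real.sq_sqrt (by positivity), Real.sq_sqrt (norm_nonneg _)]
    _ ≤ (M / 2) ^ 2 * (‖A‖ * ‖∇ f x‖) ^ 2 := by gcongr
    _ = (M / 2) ^ 2 * ‖A‖ ^ 2 * ‖∇ f x‖ ^ 2 := by ring
    _ ≤ (M / 2) ^ 2 * ‖A‖ ^ 2 * (2 * K * (f x - m)) := by
        gcongr
        exact sq_norm_gradient_le hf hK hm x
    _ = (f x - m) * (K * M ^ 2 * ‖A‖ ^ 2) / 2 := by ring
    _ ≤ b ^ 4 := by linarith

theorem sscn_local_regularizer_bound_general (hf : ContDiff ℝ 2 f) (hK : LipschitzWith K (∇ f))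
    (hm : ∀ y, m ≤ f y) {x0 : E} {M ϱ m0 : ℝ} (hM : 0 ≤ M) (hϱ : 0 ≤ ϱ) (hm0 : 0 ≤ m0)
    (hcoercive : ∀ x, f x ≤ f x0 → ∀ v, m0 * ‖v‖ ^ 2 ≤ ⟪subspaceHessian f A x v, v⟫)
    (hgap : (f x0 - m) * (K * M ^ 2 * ‖A‖ ^ 2) ≤ ϱ ^ 4 * (2 * m0 ^ 4)) (hx : f x ≤ f x0) :
    (√(M / 2) * √‖adjoint A (∇ f x)‖) • (1 : F →L[ℝ] F) ≤ ϱ • subspaceHessian f A x := by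
  have hsymm : IsSymmSndFDerivAt ℝ f x := hf.contDiffAt.isSymmSndFDerivAt (by simp)
  have hscalar : √(M / 2) * √‖adjoint A (∇ f x)‖ ≤ ϱ * m0 := by
    refine sqrt_mul_sqrt_norm_adjoint_gradient_le (hf.differentiable two_ne_zero) hK hm hM
      (by positivity) ?_
    calc (f x - m) * (K * M ^ 2 * ‖A‖ ^ 2) ≤ (f x0 - m) * (K * M ^ 2 * ‖A‖ ^ 2) := by gcongr
      _ ≤ ϱ ^ 4 * (2 * m0 ^ 4) := hgap
      _ = 2 * (ϱ * m0) ^ 4 := by ring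
  have hself : IsSelfAdjoint (ϱ • subspaceHessian f A x) :=
    .smul (.all ϱ) (isSelfAdjoint_subspaceHessian hsymm)
  refine (smul_one_le_iff_mul_sq_norm_le_inner hself).2 fun v => ?_
  calc √(M / 2) * √‖adjoint A (∇ f x)‖ * ‖v‖ ^ 2 ≤ ϱ * m0 * ‖v‖ ^ 2 := by gcongr
    _ = ϱ * (m0 * ‖v‖ ^ 2) := by ring
    _ ≤ ϱ * ⟪subspaceHessian f A x v, v⟫ := by gcongr; exact hcoercive x hx v
    _ = ⟪(ϱ • subspaceHessian f A x) v, v⟫ := (real_inner_smul_left _ _ _).symm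

end Subspace

section Matrix

open ContinuousLinearMap
open scoped RealInnerProductSpace

variable {m n : Type*} [Fintype m] [Fintype n] [DecidableEq n] {d τ : ℕ}

/-- A rectangular real matrix as a continuous linear map between Euclidean spaces. It carries the
operator norm, and its adjoint is given by the transpose. -/
noncomputable def euclideanCLM (S : Matrix m n ℝ) :
    EuclideanSpace ℝ n →L[ℝ] EuclideanSpace ℝ m :=
  (toEuclideanLin S).toContinuousLinearMap

theorem adjoint_euclideanCLM [DecidableEq m] (S : Matrix m n ℝ) :
    adjoint (euclideanCLM S) = euclideanCLM Sᵀ := by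
  rw [euclideanCLM, ← LinearMap.adjoint_toContinuousLinearMap,
    ← toEuclideanLin_conjTranspose_eq_adjoint, conjTranspose_eq_transpose_of_trivial, euclideanCLM]

theorem isLeast_norm_euclideanCLM (S : Matrix (Fin d) (Fin τ) ℝ) :
    IsLeast {c : ℝ | 0 ≤ c ∧ ∀ h : Fin τ → ℝ, ‖toE (S.mulVec h)‖ ≤ c * ‖toE h‖}
      ‖euclideanCLM S‖ :=
  ⟨⟨norm_nonneg _, fun h => (euclideanCLM S).le_opNorm (toE h)⟩,
    fun _ hc => (euclideanCLM S).opNorm_le_bound hc.1 fun v => hc.2 v.ofLp⟩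

theorem norm_toE_transpose_mulVec (S : Matrix (Fin d) (Fin τ) ℝ)
    (g : EuclideanSpace ℝ (Fin d)) :
    ‖toE (Sᵀ.mulVec (fromE g))‖ = ‖adjoint (euclideanCLM S) g‖ := by
  rw [adjoint_euclideanCLM]
  rfl

variable (f : EuclideanSpace ℝ (Fin d) → ℝ) (S : Matrix (Fin d) (Fin τ) ℝ)
  (x : EuclideanSpace ℝ (Fin d))

theorem euclideanCLM_subHess :
    euclideanCLM (subHess f S x) = subspaceHessian f (euclideanCLM S) x := by
  rw [subspaceHessian, adjoint_euclideanCLM]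
  refine ContinuousLinearMap.coe_injective <|
    (EuclideanSpace.basisFun (Fin τ) ℝ).toBasis.ext fun j => ?_
  ext i
  simp [euclideanCLM, subHess, toE, fromE, toLpLin_apply]

theorem subHess_mulVec_dotProduct (v : Fin τ → ℝ) :
    (subHess f S x).mulVec v ⬝ᵥ v = ⟪subspaceHessian f (euclideanCLM S) x (toE v), toE v⟫ := by
  rw [← euclideanCLM_subHess, EuclideanSpace.inner_eq_star_dotProduct, star_trivial,
    dotProduct_comm]
  rfl

theorem posSemidef_smul_subHess_sub_smul_one_iff {a b : ℝ} :
    (a • subHess f S x - b • (1 : Matrix (Fin τ) (Fin τ) ℝ)).PosSemidef ↔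
      b • 1 ≤ a • subspaceHessian f (euclideanCLM S) x := by
  have hone : toEuclideanLin (1 : Matrix (Fin τ) (Fin τ) ℝ) = 1 := toLpLin_one 2
  rw [← isPositive_toEuclideanLin_iff, map_sub, map_smul, map_smul, hone, ← euclideanCLM_subHess,
    le_def, ← isPositive_toLinearMap_iff]
  rfl

end Matrix

/-- Local bound on the cubic regularization term: for a convex `C²`
function `f` with `L`-Lipschitz gradient, if `m₀ = inf_{x ∈ χ⁰} λ_min(Sᵀ∇²f(x)S) > 0` and
`f(x⁰) − f* ≤ ϱ⁴·2m₀⁴/(L·M_S²·‖S‖²)`, then for every `x` in the sublevel set `χ⁰`: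
`√(M_S/2)·‖Sᵀ∇f(x)‖^{1/2}·I ⪯ ϱ·Sᵀ∇²f(x)S`. -/
theorem sscn_local_regularizer_bound
    (d τ : ℕ) (f : EuclideanSpace ℝ (Fin d) → ℝ) (hf : ContDiff ℝ 2 f)
    (hconv : ConvexOn ℝ Set.univ f)
    (L : ℝ) (hL : 0 < L)
    (hLip : ∀ x y : EuclideanSpace ℝ (Fin d), ‖gradient f x - gradient f y‖ ≤ L * ‖x - y‖)
    (xstar : EuclideanSpace ℝ (Fin d)) (hxstar : IsMinOn f Set.univ xstar)
    (x0 : EuclideanSpace ℝ (Fin d))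
    (S : Matrix (Fin d) (Fin τ) ℝ) (hrank : IsUnit (Sᵀ * S))
    (normS : ℝ)
    (hnormS : IsLeast {c : ℝ | 0 ≤ c ∧ ∀ h : Fin τ → ℝ,
      ‖toE (S.mulVec h)‖ ≤ c * ‖toE h‖} normS)
    (MS : ℝ) (hMS : 0 < MS) (ϱ : ℝ) (hϱ : 0 < ϱ)
    (m0 : ℝ) (hm0pos : 0 < m0)
    (hm0 : IsGreatest {t : ℝ | ∀ x : EuclideanSpace ℝ (Fin d), f x ≤ f x0 →
      ∀ v : Fin τ → ℝ, t * ‖toE v‖ ^ 2 ≤ (subHess f S x).mulVec v ⬝ᵥ v} m0)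
    (hlevel : f x0 - f xstar ≤ ϱ ^ 4 * (2 * m0 ^ 4) / (L * MS ^ 2 * normS ^ 2)) :
    ∀ x : EuclideanSpace ℝ (Fin d), f x ≤ f x0 →
      (ϱ • subHess f S x
        - (Real.sqrt (MS / 2) * Real.sqrt ‖toE (Sᵀ.mulVec (fromE (gradient f x)))‖) •
          (1 : Matrix (Fin τ) (Fin τ) ℝ)).PosSemidef := by
  intro x hx
  obtain rfl := hnormS.unique (isLeast_norm_euclideanCLM S)
  lift L to NNReal using hL.le
  rw [posSemidef_smul_subHess_sub_smul_one_iff, norm_toE_transpose_mulVec]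
  refine sscn_local_regularizer_bound_general hf (lipschitzWith_iff_norm_sub_le.2 hLip)
    (fun y => hxstar (Set.mem_univ y)) hMS.le hϱ.le hm0pos.le (fun y hy v => ?_)
    (mul_le_of_le_div₀ (by positivity) (by positivity) hlevel) hx
  exact (hm0.1 y hy v.ofLp).trans_eq (subHess_mulVec_dotProduct f S y v.ofLp)
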